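/- The quadruple integral A₅ := ∫₀^{π/2} ∫₀^{π/2} ∫₀^{π/2} ∫₀^{π/2} sin²φ₁ · sin³φ₂ · sin⁴φ₃ · √(sin²θ · sin²φ₁ · sin²φ₂ · sin²φ₃ + cos²φ₃) dφ₃ dφ₂ dφ₁ dθ and the triple integral A₄ := ∫₀^{π/2} ∫₀^{π/2} ∫₀^{π/2} sin²φ · sin³ψ · √(sin²θ · sin²φ · sin²ψ + cos²ψ) dψ dφ dθ satisfy A₅ = (8/15) · A₄. (Equivalently, the constants ζ₅ and ζ₄ appearing in the second-moment formulas for projected surface area of the 5-cube and 4-cube are equal: ζ₅ = ζ₄.) -/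

import Mathlib

open Real

/-!
For fixed `θ` and `φ₁`, the two inner integrals of `A₅` form an integral over the positive octant of
the unit sphere in `ℝ³`, with polar angle `φ₃` and azimuth `φ₂`. Its integrand depends only on the
polar coordinate `cos φ₃` and on `z = sin φ₃ sin φ₂`, and it is homogeneous in these two. Taking the
third axis as the polar axis, the polar angle `t` therefore factors out: it contributes
`∫ sin⁵ t = 8/15`, and what remains is the inner integral of `A₄`. The change of polar axis is
Fubini's theorem on the quarter disc onto which the octant projects along the `z`-axis.
-/

open Set MeasureTheory intervalIntegral Function

theorem sin_nonneg_of_mem_uIcc_pi_div_two {t : ℝ} (ht : t ∈ uIcc 0 (π / 2)) : 0 ≤ sin t := by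
  rw [uIcc_of_le (by positivity)] at ht
  exact sin_nonneg_of_nonneg_of_le_pi ht.1 (by linarith [ht.2, pi_pos])

theorem integrableOn_uIoc_prod_uIoc_of_continuous {E : Type*} [NormedAddCommGroup E]
    {f : ℝ × ℝ → E} (hf : Continuous f) (a b c d : ℝ) : IntegrableOn f (uIoc a b ×ˢ uIoc c d) :=
  (hf.continuousOn.integrableOn_compact (isCompact_uIcc.prod isCompact_uIcc)).mono_set
    (prod_mono uIoc_subset_uIcc uIoc_subset_uIcc)

section OctantIntegral

variable {E : Type*} [NormedAddCommGroup E] [NormedSpace ℝ E]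

theorem integral_mul_sin_smul_comp_mul_cos {f : ℝ → E} (hf : Continuous f) (c : ℝ) :
    ∫ t in (0 : ℝ)..(π / 2), (c * sin t) • f (c * cos t) = ∫ u in (0 : ℝ)..c, f u := by
  have hderiv : ∀ t ∈ uIcc (π / 2) 0, HasDerivAt (fun t ↦ c * cos t) (-(c * sin t)) t :=
    fun t _ ↦ by simpa only [mul_neg] using (hasDerivAt_cos t).const_mul c
  have hsubst := integral_deriv_smul_comp hderiv (by fun_prop) hf
  rw [integral_symm] at hsubst
  simpa [intervalIntegral.integral_neg] using hsubst

theorem integral_quarterDisc_swap {f : ℝ → ℝ → E}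
    (hf : IntegrableOn (uncurry f) (uIoc 0 1 ×ˢ uIoc 0 1)) :
    ∫ u in (0 : ℝ)..1, ∫ v in (0 : ℝ)..√(1 - u ^ 2), f u v =
      ∫ v in (0 : ℝ)..1, ∫ u in (0 : ℝ)..√(1 - v ^ 2), f u v := by
  have sqrt_mem (s : ℝ) : √(1 - s ^ 2) ∈ Icc (0 : ℝ) 1 :=
    ⟨sqrt_nonneg _, sqrt_le_one.2 (by nlinarith [sq_nonneg s])⟩
  have le_sqrt_swap {s t : ℝ} (hs : s ∈ uIcc (0 : ℝ) 1) (ht : t ∈ uIcc (0 : ℝ) 1) :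
      s ≤ √(1 - t ^ 2) ↔ t ≤ √(1 - s ^ 2) := by
    rw [uIcc_of_le zero_le_one] at hs ht
    rw [le_sqrt hs.1 (by nlinarith [ht.1, ht.2]), le_sqrt ht.1 (by nlinarith [hs.1, hs.2]),
      le_sub_comm]
  have hmeas : MeasurableSet {p : ℝ × ℝ | p.2 ≤ √(1 - p.1 ^ 2)} :=
    measurableSet_le (by fun_prop) (by fun_prop)
  calc ∫ u in (0 : ℝ)..1, ∫ v in (0 : ℝ)..√(1 - u ^ 2), f u v
    _ = ∫ u in (0 : ℝ)..1, ∫ v in (0 : ℝ)..1, {v | v ≤ √(1 - u ^ 2)}.indicator (f u) v := by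
        simp only [integral_indicator (sqrt_mem _)]
    _ = ∫ v in (0 : ℝ)..1, ∫ u in (0 : ℝ)..1, {v | v ≤ √(1 - u ^ 2)}.indicator (f u) v :=
        intervalIntegral_intervalIntegral_swap (hf.indicator hmeas)
    _ = ∫ v in (0 : ℝ)..1, ∫ u in (0 : ℝ)..1,
          {u | u ≤ √(1 - v ^ 2)}.indicator (fun u ↦ f u v) u :=
        integral_congr fun v hv ↦ integral_congr fun u hu ↦ by
          simp only [indicator_apply, mem_ofPred_eq, le_sqrt_swap hv hu]
    _ = ∫ v in (0 : ℝ)..1, ∫ u in (0 : ℝ)..√(1 - v ^ 2), f u v := by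
        simp only [integral_indicator (sqrt_mem _)]

/-- The integral of `z • f u v z` over the positive octant of the unit sphere with respect to
surface area, in spherical coordinates whose polar axis is the `u`-axis: `t` is the polar angle,
`s` the azimuth. The weight `z` turns surface area into the area `du dv` of the projection to the
`(u, v)`-plane. -/
noncomputable def octantIntegral (f : ℝ → ℝ → ℝ → E) : E :=
  ∫ t in (0 : ℝ)..(π / 2), ∫ s in (0 : ℝ)..(π / 2),
    (sin t ^ 2 * sin s) • f (cos t) (sin t * cos s) (sin t * sin s)

theorem octantIntegral_eq_integral_quarterDisc {f : ℝ → ℝ → ℝ → E}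
    (hf : Continuous fun p : ℝ × ℝ × ℝ ↦ f p.1 p.2.1 p.2.2) :
    octantIntegral f =
      ∫ u in (0 : ℝ)..1, ∫ v in (0 : ℝ)..√(1 - u ^ 2), f u v √(1 - u ^ 2 - v ^ 2) := by
  have hcont : Continuous (uncurry fun u v ↦ f u v √(1 - u ^ 2 - v ^ 2)) :=
    hf.comp₃ continuous_fst continuous_snd (by fun_prop)
  have hslice (u : ℝ) : Continuous fun v ↦ f u v √(1 - u ^ 2 - v ^ 2) :=
    hcont.comp (Continuous.prodMk_right u)
  have houter : Continuous fun u ↦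
      ∫ v in (0 : ℝ)..√(1 - u ^ 2), f u v √(1 - u ^ 2 - v ^ 2) :=
    continuous_parametric_intervalIntegral_of_continuous hcont (by fun_prop)
  rw [← integral_mul_sin_smul_comp_mul_cos houter 1, octantIntegral]
  refine integral_congr fun t ht ↦ ?_
  have hsin : √(1 - cos t ^ 2) = sin t := by
    rw [← sin_sq, sqrt_sq (sin_nonneg_of_mem_uIcc_pi_div_two ht)]
  simp only [one_mul, hsin]
  rw [← integral_mul_sin_smul_comp_mul_cos (hslice (cos t)) (sin t),
    ← intervalIntegral.integral_smul]
  refine integral_congr fun s hs ↦ ?_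
  have hz : √(1 - cos t ^ 2 - (sin t * cos s) ^ 2) = sin t * sin s := by
    rw [← sqrt_sq (mul_nonneg (sin_nonneg_of_mem_uIcc_pi_div_two ht)
      (sin_nonneg_of_mem_uIcc_pi_div_two hs))]
    congr 1
    linear_combination -sin_sq_add_cos_sq t - sin t ^ 2 * sin_sq_add_cos_sq s
  simp only [hz, smul_smul]
  congr 1
  ring

theorem octantIntegral_swap {f : ℝ → ℝ → ℝ → E}
    (hf : Continuous fun p : ℝ × ℝ × ℝ ↦ f p.1 p.2.1 p.2.2) :
    octantIntegral (fun u v z ↦ f v u z) = octantIntegral f := by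
  have hcont : Continuous (uncurry fun u v ↦ f u v √(1 - u ^ 2 - v ^ 2)) :=
    hf.comp₃ continuous_fst continuous_snd (by fun_prop)
  rw [octantIntegral_eq_integral_quarterDisc hf,
    integral_quarterDisc_swap (integrableOn_uIoc_prod_uIoc_of_continuous hcont 0 1 0 1),
    octantIntegral_eq_integral_quarterDisc
      (hf.comp₃ continuous_snd.fst continuous_fst continuous_snd.snd)]
  simp only [sub_right_comm]

theorem octantIntegral_of_homogeneous [CompleteSpace E] {g : ℝ → ℝ → E} {n : ℕ}
    (hg : Continuous (uncurry g))
    (hhom : ∀ c u z : ℝ, 0 ≤ c → g (c * u) (c * z) = c ^ n • g u z) :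
    octantIntegral (fun u _ z ↦ g u z) =
      (∫ t in (0 : ℝ)..(π / 2), sin t ^ (n + 2)) •
        ∫ s in (0 : ℝ)..(π / 2), sin s • g (cos s) (sin s) := by
  have hcont : Continuous fun p : ℝ × ℝ × ℝ ↦ g p.1 p.2.2 :=
    hg.comp₂ continuous_fst continuous_snd.snd
  rw [← octantIntegral_swap (f := fun u _ z ↦ g u z) hcont, octantIntegral,
    ← intervalIntegral.integral_smul_const]
  refine integral_congr fun t ht ↦ ?_
  simp only [hhom _ _ _ (sin_nonneg_of_mem_uIcc_pi_div_two ht),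
    ← intervalIntegral.integral_smul, smul_smul]
  refine integral_congr fun s _ ↦ ?_
  congr 1
  ring

end OctantIntegral

theorem integral_sin_pow_five : ∫ t in (0 : ℝ)..(π / 2), sin t ^ 5 = 8 / 15 := by
  rw [integral_sin_pow 3, integral_sin_pow 1]
  norm_num

theorem integral_integral_sin_pow_mul_sqrt (a : ℝ) (k : ℕ) :
    ∫ x in (0 : ℝ)..(π / 2), ∫ y in (0 : ℝ)..(π / 2),
        sin x ^ (k + 1) * sin y ^ (k + 2) * √(a * sin x ^ 2 * sin y ^ 2 + cos y ^ 2) =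
      (∫ t in (0 : ℝ)..(π / 2), sin t ^ (k + 3)) *
        ∫ s in (0 : ℝ)..(π / 2), sin s ^ (k + 1) * √(a * sin s ^ 2 + cos s ^ 2) := by
  let g (u z : ℝ) : ℝ := z ^ k * √(a * z ^ 2 + u ^ 2)
  have hhom (c u z : ℝ) (hc : 0 ≤ c) : g (c * u) (c * z) = c ^ (k + 1) • g u z := by
    have hsqrt : √(a * (c * z) ^ 2 + (c * u) ^ 2) = c * √(a * z ^ 2 + u ^ 2) := by
      rw [← sqrt_sq hc, ← sqrt_mul (sq_nonneg c), sqrt_sq hc]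
      ring_nf
    simp only [g, hsqrt, smul_eq_mul]
    ring
  have hint := integrableOn_uIoc_prod_uIoc_of_continuous
    (f := uncurry fun x y ↦
      sin x ^ (k + 1) * sin y ^ (k + 2) * √(a * sin x ^ 2 * sin y ^ 2 + cos y ^ 2))
    (by unfold uncurry; fun_prop) 0 (π / 2) 0 (π / 2)
  calc
    _ = octantIntegral fun u _ z ↦ g u z := by
      rw [intervalIntegral_intervalIntegral_swap hint]
      refine integral_congr fun y _ ↦ integral_congr fun x _ ↦ ?_
      simp only [g, smul_eq_mul]
      ring_nf
    _ = (∫ t in (0 : ℝ)..(π / 2), sin t ^ (k + 3)) *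
          ∫ s in (0 : ℝ)..(π / 2), sin s * g (cos s) (sin s) :=
      octantIntegral_of_homogeneous (by fun_prop) hhom
    _ = _ := by simp only [g, pow_succ', mul_assoc]

/-- The quadruple integral `A₅` (the 'hard' integral for the 5-cube) equals
`(8/15)` times the triple integral `A₄` (the 'hard' integral for the 4-cube);
equivalently, the constants `ζ₅` and `ζ₄` of the paper are equal. -/
theorem zeta5_eq_zeta4 :
    (∫ θ in (0:ℝ)..(π/2), ∫ φ₁ in (0:ℝ)..(π/2), ∫ φ₂ in (0:ℝ)..(π/2),
        ∫ φ₃ in (0:ℝ)..(π/2),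
        Real.sin φ₁ ^ 2 * Real.sin φ₂ ^ 3 * Real.sin φ₃ ^ 4 *
          Real.sqrt (Real.sin θ ^ 2 * Real.sin φ₁ ^ 2 * Real.sin φ₂ ^ 2 *
            Real.sin φ₃ ^ 2 + Real.cos φ₃ ^ 2))
    = (8/15) *
      ∫ θ in (0:ℝ)..(π/2), ∫ φ in (0:ℝ)..(π/2), ∫ ψ in (0:ℝ)..(π/2),
        Real.sin φ ^ 2 * Real.sin ψ ^ 3 *
          Real.sqrt (Real.sin θ ^ 2 * Real.sin φ ^ 2 * Real.sin ψ ^ 2 +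
            Real.cos ψ ^ 2) := by
  rw [← intervalIntegral.integral_const_mul]
  refine integral_congr fun θ _ ↦ ?_
  simp only [← intervalIntegral.integral_const_mul]
  refine integral_congr fun φ _ ↦ ?_
  have hinner := integral_integral_sin_pow_mul_sqrt (sin θ ^ 2 * sin φ ^ 2) 2
  rw [integral_sin_pow_five] at hinner
  simp only [mul_assoc, intervalIntegral.integral_const_mul] at hinner ⊢
  rw [hinner]
  ring
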